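/- arXiv:2412.08044 — 5 statements merged into one kernel-verified Lean document; each statement's English description precedes it below -/
import Mathlib

section
/- Let m > 0 and k ∈ ℝ, and for each n ≥ 0 define the Hermite expansion coefficient c_n = ∫_ℝ e^{-m x² + i k x} Ĥ_n(x) dx of the function e^{-m x²} e^{i k x}. Then for every n ≥ 1 the coefficients satisfy the recurrence c_{n+1} = (1/(2m+1)) · i k · √(2/(n+1)) · c_n − ((2m−1)/(2m+1)) · √(n/(n+1)) · c_{n−1}. -/
open MeasureTheory Real
noncomputable section
def physHermite : ℕ → ℝ → ℝ
  | 0 => fun _ => 1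
  | 1 => fun x => 2 * x
  | n + 2 => fun x => 2 * x * physHermite (n + 1) x - 2 * (n + 1) * physHermite n x
def hermiteFun (n : ℕ) (x : ℝ) : ℝ :=
  (Real.sqrt (Real.sqrt Real.pi))⁻¹ * (Real.sqrt (2 ^ n * Nat.factorial n))⁻¹ *
    Real.exp (-x ^ 2 / 2) * physHermite n x

lemma physHermite_rec (n : ℕ) (x : ℝ) : physHermite (n + 2) x =
    2 * x * physHermite (n + 1) x - 2 * (n + 1) * physHermite n x := by
  rw [physHermite]

lemma physHermite_deriv (n : ℕ) (x : ℝ) :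
    HasDerivAt (physHermite n) (2 * n * physHermite (n - 1) x) x ∧
    HasDerivAt (physHermite (n + 1)) (2 * (n + 1) * physHermite n x) x := by
  induction n with
  | zero =>
    constructor
    · simpa [physHermite] using hasDerivAt_const x (1 : ℝ)
    · simpa [physHermite] using (hasDerivAt_id x).const_mul 2
  | succ n ih =>
    refine ⟨by simpa using ih.2, ?_⟩
    have h : physHermite (n + 1 + 1) = fun x =>
        2 * x * physHermite (n + 1) x - 2 * (n + 1) * physHermite n x := by
      funext y; exact physHermite_rec n y
    rw [h]
    have h2 := (((hasDerivAt_id x).const_mul 2).mul ih.2).sub (ih.1.const_mul (2 * (n + 1 : ℝ)))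
    refine h2.congr_deriv ?_
    rcases n with _ | n
    · simp [physHermite]; ring
    · have := physHermite_rec n x
      simp only [id, Nat.add_sub_cancel]
      push_cast
      rw [this]
      ring

def gE (m k : ℝ) (x : ℝ) : ℂ :=
  Complex.exp (-((m : ℂ) + 1 / 2) * (x : ℂ) ^ 2 + Complex.I * (k : ℂ) * (x : ℂ))

lemma gE_deriv (m k x : ℝ) :
    HasDerivAt (gE m k) ((-(2 * (m : ℂ) + 1) * x + Complex.I * k) * gE m k x) x := by
  have h1 : HasDerivAt (fun x : ℝ => (x : ℂ)) 1 x := Complex.ofRealCLM.hasDerivAt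
  have h2 := (((h1.pow 2).const_mul (-((m : ℂ) + 1 / 2))).add
    (h1.const_mul (Complex.I * (k : ℂ)))).cexp
  refine h2.congr_deriv ?_
  simp [gE]
  ring

lemma gE_norm (m k x : ℝ) : ‖gE m k x‖ = Real.exp (-(m + 1 / 2) * x ^ 2) := by
  rw [gE, Complex.norm_exp]
  congr 1
  have : -((m : ℂ) + 1 / 2) * (x : ℂ) ^ 2 + Complex.I * (k : ℂ) * (x : ℂ)
    = ((-(m + 1 / 2) * x ^ 2 : ℝ) : ℂ) + ((k * x : ℝ) : ℂ) * Complex.I := by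
    push_cast; ring
  rw [this, Complex.add_re, Complex.ofReal_re, Complex.re_ofReal_mul, Complex.I_re]
  ring

lemma gE_int_pow (m k : ℝ) (hm : 0 < m) (j : ℕ) :
    Integrable (fun x : ℝ => gE m k x * (x : ℂ) ^ j) := by
  have h := integrable_rpow_mul_exp_neg_mul_sq (b := m + 1 / 2) (by linarith) (s := j)
    (by have : (0 : ℝ) ≤ j := Nat.cast_nonneg j
        linarith)
  refine h.norm.mono' ?_ (Filter.Eventually.of_forall fun x => ?_)
  · apply Continuous.aestronglyMeasurable
    unfold gE
    fun_prop
  · simp [gE_norm, mul_comm]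

lemma gE_int (m k : ℝ) (hm : 0 < m) (n : ℕ) : ∀ j : ℕ,
    Integrable (fun x : ℝ => gE m k x * (x : ℂ) ^ j * (physHermite n x : ℂ)) ∧
    Integrable (fun x : ℝ => gE m k x * (x : ℂ) ^ j * (physHermite (n + 1) x : ℂ)) := by
  induction n with
  | zero =>
    intro j
    constructor
    · simpa [physHermite] using gE_int_pow m k hm j
    · refine ((gE_int_pow m k hm (j + 1)).const_mul 2).congr (.of_forall fun x => ?_)
      simp [physHermite]; ring
  | succ n ih =>
    intro j
    refine ⟨(ih j).2, ?_⟩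
    refine (((ih (j + 1)).2.const_mul 2).sub ((ih j).1.const_mul (2 * (n + 1 : ℂ)))).congr
      (.of_forall fun x => ?_)
    simp [physHermite_rec]; ring

lemma gE_int0 (m k : ℝ) (hm : 0 < m) (n : ℕ) :
    Integrable (fun x : ℝ => gE m k x * (physHermite n x : ℂ)) := by
  simpa using (gE_int m k hm n 0).1

lemma int_rec (m k : ℝ) (hm : 0 < m) (n : ℕ) :
    (2 * (m : ℂ) + 1) * (∫ x : ℝ, gE m k x * (physHermite (n + 2) x : ℂ)) =
      2 * (Complex.I * k) * (∫ x : ℝ, gE m k x * (physHermite (n + 1) x : ℂ))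
      - (2 * (m : ℂ) - 1) * (2 * (n + 1)) * (∫ x : ℝ, gE m k x * (physHermite n x : ℂ)) := by
  have i0 := (gE_int0 m k hm n).const_mul ((2 * (m : ℂ) - 1) * (2 * (n + 1)))
  have i1 := (gE_int0 m k hm (n + 1)).const_mul (2 * (Complex.I * k))
  have i2 := (gE_int0 m k hm (n + 2)).const_mul (2 * (m : ℂ) + 1)
  have hd : ∀ x : ℝ, HasDerivAt (fun x : ℝ => 2 * (gE m k x * (physHermite (n + 1) x : ℂ)))
      (2 * (Complex.I * k) * (gE m k x * (physHermite (n + 1) x : ℂ))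
        - (2 * (m : ℂ) - 1) * (2 * (n + 1)) * (gE m k x * (physHermite n x : ℂ))
        - (2 * (m : ℂ) + 1) * (gE m k x * (physHermite (n + 2) x : ℂ))) x := by
    intro x
    have h := ((gE_deriv m k x).mul (physHermite_deriv n x).2.ofReal_comp).const_mul 2
    refine h.congr_deriv ?_
    rw [physHermite_rec]
    push_cast
    ring
  have h := integral_eq_zero_of_hasDerivAt_of_integrable hd ((i1.sub i0).sub i2)
    ((gE_int0 m k hm (n + 1)).const_mul 2)
  have i10 : Integrable (fun x : ℝ => 2 * (Complex.I * k) * (gE m k x * (physHermite (n + 1) x : ℂ))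
        - (2 * (m : ℂ) - 1) * (2 * (n + 1)) * (gE m k x * (physHermite n x : ℂ))) := i1.sub i0
  rw [integral_sub i10 i2, integral_sub i1 i0, integral_const_mul, integral_const_mul,
    integral_const_mul] at h
  linear_combination -h

lemma coeff_eq (m k : ℝ) (n : ℕ) :
    (∫ x : ℝ, Complex.exp (-(m : ℂ) * (x : ℂ) ^ 2 + Complex.I * (k : ℂ) * (x : ℂ)) *
        (hermiteFun n x : ℂ)) =
    (((Real.sqrt (Real.sqrt Real.pi))⁻¹ : ℝ) : ℂ) *
      (((Real.sqrt (2 ^ n * Nat.factorial n))⁻¹ : ℝ) : ℂ) *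
      ∫ x : ℝ, gE m k x * (physHermite n x : ℂ) := by
  rw [← integral_const_mul]
  congr 1
  funext x
  have : gE m k x = Complex.exp (-(m : ℂ) * (x : ℂ) ^ 2 + Complex.I * (k : ℂ) * (x : ℂ)) *
      ((Real.exp (-x ^ 2 / 2) : ℝ) : ℂ) := by
    rw [gE, Complex.ofReal_exp, ← Complex.exp_add]
    congr 1
    push_cast
    ring
  rw [this, hermiteFun]
  push_cast
  ring

lemma norm_succ (n : ℕ) : (Real.sqrt (2 ^ (n + 1) * Nat.factorial (n + 1)))⁻¹ =
    (Real.sqrt (2 ^ n * Nat.factorial n))⁻¹ * (Real.sqrt (2 * (n + 1)))⁻¹ := by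
  rw [← mul_inv, ← Real.sqrt_mul (by positivity)]
  congr 2
  rw [Nat.factorial_succ]
  push_cast
  ring

lemma sq1 (a : ℝ) (ha : 0 < a) : Real.sqrt (2 / a) = 2 * (Real.sqrt (2 * a))⁻¹ := by
  rw [Real.sqrt_eq_iff_mul_self_eq (by positivity) (by positivity)]
  have h := Real.mul_self_sqrt (show 0 ≤ 2 * a by positivity)
  have h0 : Real.sqrt (2 * a) ≠ 0 := by positivity
  field_simp
  nlinarith

lemma sq2 (a b : ℝ) (ha : 0 < a) (hb : 0 < b) : Real.sqrt (b / a) =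
    2 * b * (Real.sqrt (2 * a))⁻¹ * (Real.sqrt (2 * b))⁻¹ := by
  have h : Real.sqrt (b / a) = Real.sqrt (2 * b) * (Real.sqrt (2 * a))⁻¹ := by
    rw [← div_eq_mul_inv, ← Real.sqrt_div (by positivity)]
    congr 1
    field_simp
  have h1 := Real.mul_self_sqrt (show 0 ≤ 2 * b by positivity)
  have h0 : Real.sqrt (2 * b) ≠ 0 := by positivity
  rw [h]
  nth_rewrite 2 [← h1]
  field_simp

theorem hermite_coeff_recurrence (m k : ℝ) (hm : 0 < m) (c : ℕ → ℂ)
    (hc : ∀ n : ℕ, c n =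
      ∫ x : ℝ, Complex.exp (-(m : ℂ) * (x : ℂ) ^ 2 + Complex.I * (k : ℂ) * (x : ℂ)) *
        (hermiteFun n x : ℂ)) :
    ∀ n : ℕ, 1 ≤ n →
      c (n + 1) = (1 / (2 * (m : ℂ) + 1)) * (Complex.I * (k : ℂ)) *
          (Real.sqrt (2 / ((n : ℝ) + 1)) : ℂ) * c n
        - ((2 * (m : ℂ) - 1) / (2 * (m : ℂ) + 1)) *
          (Real.sqrt ((n : ℝ) / ((n : ℝ) + 1)) : ℂ) * c (n - 1) := by
  intro n hn
  obtain ⟨n, rfl⟩ : ∃ j, n = j + 1 := ⟨n - 1, by omega⟩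
  have hne : (2 * (m : ℂ) + 1) ≠ 0 := by
    have : (2 * m + 1 : ℝ) ≠ 0 := by positivity
    exact_mod_cast this
  have h := int_rec m k hm n
  rw [hc, hc, hc, coeff_eq, coeff_eq, coeff_eq, Nat.add_sub_cancel, norm_succ (n + 1),
    norm_succ n, sq1 _ (by positivity), sq2 _ _ (by positivity) (by positivity)]
  generalize (∫ x : ℝ, gE m k x * (physHermite n x : ℂ)) = A at *
  generalize (∫ x : ℝ, gE m k x * (physHermite (n + 1) x : ℂ)) = B at *
  have h' : (∫ x : ℝ, gE m k x * (physHermite (n + 1 + 1) x : ℂ)) =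
    (2 * (Complex.I * k) * B - (2 * (m : ℂ) - 1) * (2 * (n + 1)) * A) / (2 * (m : ℂ) + 1) := by
    rw [eq_div_iff hne, ← h]; ring
  rw [h']
  generalize (Real.sqrt (2 ^ n * Nat.factorial n))⁻¹ = s
  generalize (Real.sqrt (Real.sqrt Real.pi))⁻¹ = r
  have e : (2 * ((n : ℝ) + 1)) = 2 * ((n + 1 : ℕ) : ℝ) := by push_cast; ring
  rw [e]
  have hp : (Real.sqrt (2 * ((n + 1 : ℕ) : ℝ))) ^ 2 = 2 * ((n + 1 : ℕ) : ℝ) :=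
    Real.sq_sqrt (by positivity)
  generalize (Real.sqrt (2 * ((n + 1 : ℕ) : ℝ)))⁻¹ = p at *
  generalize (Real.sqrt (2 * (((n + 1 : ℕ) : ℝ) + 1)))⁻¹ = q
  push_cast
  field_simp
end
end

section
/- Let g_{k,s}(x) = e^{-(x−s)²/2 + i k x} for k, s ∈ ℝ, and let z = k − i s. Then for every n ≥ 0 the Hermite expansion coefficient of g_{k,s} satisfies c_n(k,s) = ∫_ℝ g_{k,s}(x) Ĥ_n(x) dx = π^{1/4} e^{-z²/4 − s²/2} (i z)^n / √(2^n n!). -/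
open MeasureTheory Real
noncomputable section
/-- The Gaussian wave packet `g_{k,s}(x) = e^{-(x-s)²/2 + ikx}`. -/
def gks (k s : ℝ) (x : ℝ) : ℂ :=
  Complex.exp (-((x : ℂ) - (s : ℂ)) ^ 2 / 2 + Complex.I * (k : ℂ) * (x : ℂ))


lemma pH_hasDeriv : ∀ (n : ℕ) (x : ℝ),
    HasDerivAt (physHermite n) (2 * x * physHermite n x - physHermite (n + 1) x) x
  | 0, x => by
      have h := hasDerivAt_const x (1 : ℝ)
      have e : physHermite 0 = fun _ => 1 := by funext y; simp [physHermite]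
      rw [e]
      exact h.congr_deriv (by simp [physHermite])
  | 1, x => by
      have h := (hasDerivAt_id x).const_mul (2 : ℝ)
      have e : physHermite 1 = fun y => 2 * y := by funext y; simp [physHermite]
      rw [e]
      exact h.congr_deriv (by simp [physHermite])
  | n + 2, x => by
      have h0 := pH_hasDeriv n x
      have h1 := pH_hasDeriv (n + 1) x
      have h := (((hasDerivAt_id x).const_mul (2 : ℝ)).mul h1).sub
        (h0.const_mul (2 * ((n : ℝ) + 1)))
      have e : physHermite (n + 2) = fun x => 2 * x * physHermite (n + 1) x
        - 2 * ((n : ℝ) + 1) * physHermite n x := by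
        funext y; simp [physHermite]
      have e3 : physHermite (n + 2 + 1) x = 2 * x * physHermite (n + 2) x
        - 2 * (((n + 1 : ℕ) : ℝ) + 1) * physHermite (n + 1) x := by
        rw [physHermite]
      rw [e3]
      have e2 := congrFun e x
      rw [e]
      refine h.congr_deriv ?_
      simp only [id, e2]
      push_cast
      ring

lemma pH_cont (n : ℕ) : Continuous (physHermite n) :=
  continuous_iff_continuousAt.2 fun x => (pH_hasDeriv n x).continuousAt

lemma pH_int : ∀ (n m : ℕ),
    Integrable (fun x : ℝ => x ^ m * (Real.exp (-x ^ 2 / 2) * physHermite n x))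
  | 0, m => by
      have h := integrable_rpow_mul_exp_neg_mul_sq (b := 1 / 2) (by norm_num) (s := (m : ℝ))
        (by have : (0 : ℝ) ≤ m := m.cast_nonneg
            linarith)
      refine h.congr (Filter.Eventually.of_forall fun x => ?_)
      simp only [physHermite, Real.rpow_natCast, mul_one]
      congr 2; ring
  | 1, m => by
      have h := (pH_int 0 (m + 1)).const_mul 2
      refine h.congr (Filter.Eventually.of_forall fun x => ?_)
      simp only [physHermite]; ring
  | n + 2, m => by
      have h := ((pH_int (n + 1) (m + 1)).const_mul 2).sub
        ((pH_int n m).const_mul (2 * ((n : ℝ) + 1)))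
      refine h.congr (Filter.Eventually.of_forall fun x => ?_)
      simp only [physHermite, Pi.sub_apply]; ring

lemma gks_norm_le (k s x : ℝ) : ‖gks k s x‖ ≤ 1 := by
  have e : (-((x : ℂ) - (s : ℂ)) ^ 2 / 2 + Complex.I * (k : ℂ) * (x : ℂ))
      = ((-(x - s) ^ 2 / 2 : ℝ) : ℂ) + ((k * x : ℝ) : ℂ) * Complex.I := by
    push_cast; ring
  rw [gks, e, Complex.norm_exp]
  simp only [Complex.add_re, Complex.ofReal_re, Complex.re_ofReal_mul, Complex.I_re, mul_zero,
    add_zero]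
  rw [Real.exp_le_one_iff]
  nlinarith [sq_nonneg (x - s)]

lemma gks_cont (k s : ℝ) : Continuous (gks k s) := by
  unfold gks; fun_prop

lemma gks_int (k s : ℝ) (n : ℕ) : Integrable (fun x : ℝ =>
    gks k s x * ((Real.exp (-x ^ 2 / 2) * physHermite n x : ℝ) : ℂ)) := by
  have h : Integrable (fun x : ℝ => ((Real.exp (-x ^ 2 / 2) * physHermite n x : ℝ) : ℂ)) := by
    have := (pH_int n 0).ofReal (𝕜 := ℂ)
    simpa using this
  exact h.bdd_mul (c := 1) (gks_cont k s).aestronglyMeasurable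
    (Filter.Eventually.of_forall (gks_norm_le k s))

lemma gks_step (k s : ℝ) (n : ℕ) :
    (∫ x : ℝ, gks k s x * ((Real.exp (-x ^ 2 / 2) * physHermite (n + 1) x : ℝ) : ℂ))
    = (Complex.I * ((k : ℂ) - Complex.I * (s : ℂ))) *
      ∫ x : ℝ, gks k s x * ((Real.exp (-x ^ 2 / 2) * physHermite n x : ℝ) : ℂ) := by
  set w := Complex.I * ((k : ℂ) - Complex.I * (s : ℂ)) with hw
  have hw' : w = s + Complex.I * k := by
    rw [hw]; ring_nf; rw [Complex.I_sq]; ring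
  have hi := ((gks_int k s n).const_mul w).sub (gks_int k s (n + 1))
  have key := integral_eq_zero_of_hasDerivAt_of_integrable (f := fun x : ℝ =>
      gks k s x * ((Real.exp (-x ^ 2 / 2) * physHermite n x : ℝ) : ℂ)) (fun x => ?_) hi
    (gks_int k s n)
  · have := integral_sub ((gks_int k s n).const_mul w) (gks_int k s (n + 1))
    rw [integral_const_mul] at this
    simp only [Pi.sub_apply] at key
    rw [← sub_eq_zero, ← neg_eq_zero, neg_sub, ← this]
    exact key
  · have hx : HasDerivAt (fun y : ℝ => (y : ℂ)) 1 x := Complex.ofRealCLM.hasDerivAt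
    have h1 : HasDerivAt (gks k s) _ x :=
      ((((hx.sub_const (s : ℂ)).pow 2).neg.div_const 2).add
        (hx.const_mul (Complex.I * (k : ℂ)))).cexp
    have h2 : HasDerivAt (fun y : ℝ => Real.exp (-y ^ 2 / 2)) _ x :=
      (((hasDerivAt_id x).pow 2).neg.div_const 2).exp
    have h3 := h1.mul (h2.mul (pH_hasDeriv n x)).ofReal_comp
    refine h3.congr_deriv ?_
    simp only [Pi.sub_apply, Pi.mul_apply, Pi.add_apply, Pi.neg_apply, Pi.pow_apply, id, gks, hw']
    push_cast
    ring

lemma gks_main (k s : ℝ) (n : ℕ) :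
    (∫ x : ℝ, gks k s x * ((Real.exp (-x ^ 2 / 2) * physHermite n x : ℝ) : ℂ))
    = (Complex.I * ((k : ℂ) - Complex.I * (s : ℂ))) ^ n * ((Real.sqrt Real.pi : ℝ) *
      Complex.exp (-((k : ℂ) - Complex.I * (s : ℂ)) ^ 2 / 4 - (s : ℂ) ^ 2 / 2)) := by
  induction n with
  | zero =>
    have h := integral_cexp_quadratic (b := -1) (by simp) (s + Complex.I * k) (-(s : ℂ) ^ 2 / 2)
    have e : ((π : ℂ) / - -1) ^ (1 / 2 : ℂ) = (Real.sqrt π : ℝ) := by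
      rw [Real.sqrt_eq_rpow, Complex.ofReal_cpow Real.pi_pos.le]; simp
    rw [e] at h
    rw [pow_zero, one_mul]
    convert h using 2
    · funext x
      simp only [gks, physHermite, mul_one, Complex.ofReal_exp]
      rw [← Complex.exp_add]
      congr 1
      push_cast
      ring
    · congr 1
      ring_nf
      rw [Complex.I_sq]; ring
  | succ n ih => rw [gks_step, ih]; ring

/-- Hermite coefficients of the Gaussian wave packet:
`c_n(k,s) = π^{1/4} e^{-z²/4 - s²/2} (iz)^n / √(2^n n!)` with `z = k - is`. -/
theorem gks_hermite_coeff (k s : ℝ) (n : ℕ) :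
    (∫ x : ℝ, gks k s x * (hermiteFun n x : ℂ))
      = (Real.sqrt (Real.sqrt Real.pi) : ℂ) *
          Complex.exp (-((k : ℂ) - Complex.I * (s : ℂ)) ^ 2 / 4 - (s : ℂ) ^ 2 / 2) *
          (Complex.I * ((k : ℂ) - Complex.I * (s : ℂ))) ^ n /
          (Real.sqrt (2 ^ n * Nat.factorial n) : ℂ) := by
  have e : ∀ x : ℝ, gks k s x * (hermiteFun n x : ℂ) =
      (((Real.sqrt (Real.sqrt Real.pi))⁻¹ * (Real.sqrt (2 ^ n * Nat.factorial n))⁻¹ : ℝ) : ℂ) *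
      (gks k s x * ((Real.exp (-x ^ 2 / 2) * physHermite n x : ℝ) : ℂ)) := by
    intro x
    simp only [hermiteFun]
    push_cast
    ring
  simp only [e]
  rw [integral_const_mul, gks_main]
  have hp : (Real.sqrt (Real.sqrt Real.pi) : ℂ) ≠ 0 := by
    rw [Complex.ofReal_ne_zero]; positivity
  have hq : (Real.sqrt Real.pi : ℂ) = Real.sqrt (Real.sqrt Real.pi) * Real.sqrt (Real.sqrt Real.pi) := by
    rw [← Complex.ofReal_mul, Real.mul_self_sqrt (Real.sqrt_nonneg _)]
  rw [hq, Complex.ofReal_mul, Complex.ofReal_inv, Complex.ofReal_inv]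
  field_simp
end
end

section
/- There is an absolute constant C > 0 such that for all k, s ∈ ℝ and all N ≥ 0, the function g_{k,s}(x) = e^{-(x−s)²/2 + i k x} satisfies ‖g_{k,s} − Π̂_N g_{k,s}‖ ≤ C · (1/√((N+1)!)) · ((k² + s²)/2)^{(N+1)/2}, where ‖·‖ is the L²(ℝ) norm. -/
open MeasureTheory Real
noncomputable section
def L2norm {E : Type*} [NormedAddCommGroup E] (f : ℝ → E) : ℝ :=
  Real.sqrt (∫ x : ℝ, ‖f x‖ ^ 2)
def scaledHermite (β : ℝ) (n : ℕ) (x : ℝ) : ℝ :=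
  Real.sqrt β * hermiteFun n (β * x)
def hermiteProj (β : ℝ) (N : ℕ) (u : ℝ → ℂ) (x : ℝ) : ℂ :=
  ∑ n ∈ Finset.range (N + 1),
    (∫ y : ℝ, u y * (scaledHermite β n y : ℂ)) * (scaledHermite β n x : ℂ)
def EB (f : ℝ → ℂ) : Prop :=
  Continuous f ∧ ∃ C A : ℝ, 0 ≤ C ∧ 0 ≤ A ∧ ∀ x, ‖f x‖ ≤ C * Real.exp (A * |x|)

lemma EB.const (c : ℂ) : EB (fun _ => c) :=
  ⟨continuous_const, ‖c‖, 0, norm_nonneg _, le_rfl, fun x => by simp⟩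

lemma EB.mul {f g : ℝ → ℂ} (hf : EB f) (hg : EB g) : EB (fun x => f x * g x) := by
  obtain ⟨hfc, C, A, hC, hA, hf⟩ := hf
  obtain ⟨hgc, C', A', hC', hA', hg⟩ := hg
  refine ⟨hfc.mul hgc, C * C', A + A', by positivity, by positivity, fun x => ?_⟩
  rw [norm_mul, add_mul, Real.exp_add]
  calc ‖f x‖ * ‖g x‖ ≤ (C * Real.exp (A * |x|)) * (C' * Real.exp (A' * |x|)) := by
        gcongr
        · exact hf x
        · exact hg x
    _ = _ := by ring

lemma EB.add {f g : ℝ → ℂ} (hf : EB f) (hg : EB g) : EB (fun x => f x + g x) := by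
  obtain ⟨hfc, C, A, hC, hA, hf⟩ := hf
  obtain ⟨hgc, C', A', hC', hA', hg⟩ := hg
  refine ⟨hfc.add hgc, C + C', A + A', by positivity, by positivity, fun x => ?_⟩
  have h1 : Real.exp (A * |x|) ≤ Real.exp ((A + A') * |x|) := by
    gcongr; linarith
  have h2 : Real.exp (A' * |x|) ≤ Real.exp ((A + A') * |x|) := by
    gcongr; linarith
  calc ‖f x + g x‖ ≤ ‖f x‖ + ‖g x‖ := norm_add_le _ _
    _ ≤ C * Real.exp (A * |x|) + C' * Real.exp (A' * |x|) := add_le_add (hf x) (hg x)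
    _ ≤ C * Real.exp ((A + A') * |x|) + C' * Real.exp ((A + A') * |x|) := by gcongr
    _ = _ := by ring

lemma EB.sub {f g : ℝ → ℂ} (hf : EB f) (hg : EB g) : EB (fun x => f x - g x) := by
  have := hf.add ((EB.const (-1)).mul hg)
  simpa [sub_eq_add_neg] using this

lemma EB.conj {f : ℝ → ℂ} (hf : EB f) : EB (fun x => (starRingEnd ℂ) (f x)) := by
  obtain ⟨hfc, C, A, hC, hA, hf⟩ := hf
  exact ⟨Complex.continuous_conj.comp hfc, C, A, hC, hA, fun x => by simpa using hf x⟩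

lemma EB.id : EB (fun x => (x : ℂ)) := by
  refine ⟨Complex.continuous_ofReal, 1, 1, by simp, by simp, fun x => ?_⟩
  simp only [Complex.norm_real, Real.norm_eq_abs, one_mul]
  linarith [Real.add_one_le_exp |x|]

lemma EB.cexp (z : ℂ) : EB (fun x => Complex.exp (z * x)) := by
  refine ⟨by fun_prop, 1, ‖z‖, by simp, by simp, fun x => ?_⟩
  rw [Complex.norm_exp, one_mul]
  gcongr
  calc (z * x).re ≤ ‖z * x‖ := Complex.re_le_norm _
    _ = _ := by simp

lemma EB.sum {f : ℕ → ℝ → ℂ} (hf : ∀ n, EB (f n)) (N : ℕ) :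
    EB (fun x => ∑ n ∈ Finset.range N, f n x) := by
  induction N with
  | zero => simpa using EB.const 0
  | succ N ih => simpa [Finset.sum_range_succ] using ih.add (hf N)

def W (x : ℝ) : ℂ := (Real.exp (-x ^ 2) : ℂ)

lemma EB.integrable {f : ℝ → ℂ} (hf : EB f) : Integrable (fun x => W x * f x) := by
  obtain ⟨hfc, C, A, hC, hA, hf⟩ := hf
  have h := (integrable_exp_neg_mul_sq (b := 1 / 2) (by norm_num)).const_mul (C * Real.exp (A ^ 2 / 2))
  refine h.mono' (by unfold W; fun_prop) (ae_of_all _ fun x => ?_)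
  rw [norm_mul, W, Complex.norm_real, Real.norm_eq_abs, abs_of_pos (Real.exp_pos _)]
  calc Real.exp (-x ^ 2) * ‖f x‖ ≤ Real.exp (-x ^ 2) * (C * Real.exp (A * |x|)) := by
        gcongr; exact hf x
    _ = C * Real.exp (-x ^ 2 + A * |x|) := by rw [Real.exp_add]; ring
    _ ≤ C * Real.exp (A ^ 2 / 2 + -(1 / 2) * x ^ 2) := by
        refine mul_le_mul_of_nonneg_left (Real.exp_le_exp.2 ?_) hC
        nlinarith [sq_nonneg (A - |x|), sq_abs x]
    _ = _ := by rw [Real.exp_add]; ring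

def Hc (n : ℕ) (x : ℝ) : ℂ := (physHermite n x : ℂ)

lemma Hc_zero (x : ℝ) : Hc 0 x = 1 := by simp [Hc, physHermite]
lemma Hc_one (x : ℝ) : Hc 1 x = 2 * x := by simp [Hc, physHermite]
lemma Hc_succ (n : ℕ) (x : ℝ) :
    Hc (n + 2) x = 2 * x * Hc (n + 1) x - 2 * (n + 1) * Hc n x := by
  simp [Hc, physHermite]

lemma Hc_EB (n : ℕ) : EB (Hc n) := by
  induction n using Nat.twoStepInduction with
  | zero => simpa [funext Hc_zero] using EB.const 1
  | one => simpa [funext Hc_one] using (EB.const 2).mul EB.id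
  | more n h1 h2 =>
    rw [funext (Hc_succ n)]
    exact (((EB.const 2).mul EB.id).mul h2).sub ((EB.const (2 * (n + 1))).mul h1)

lemma hasDerivAt_ofReal' (x : ℝ) : HasDerivAt (fun x : ℝ => (x : ℂ)) 1 x :=
  Complex.ofRealCLM.hasDerivAt

lemma Hc_deriv0 (x : ℝ) : HasDerivAt (Hc 0) 0 x := by
  rw [funext Hc_zero]; exact hasDerivAt_const _ _

lemma Hc_deriv (n : ℕ) (x : ℝ) : HasDerivAt (Hc (n + 1)) (2 * (n + 1) * Hc n x) x := by
  induction n using Nat.twoStepInduction with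
  | zero =>
    simp only [zero_add, funext Hc_one, Hc_zero]
    simpa using (hasDerivAt_ofReal' x).const_mul 2
  | one =>
    rw [funext (Hc_succ 0)]
    have := (((hasDerivAt_ofReal' x).const_mul 2).mul ((hasDerivAt_ofReal' x).const_mul 2)).sub
      (hasDerivAt_const x (2 : ℂ))
    simp only [zero_add, funext Hc_one, funext Hc_zero]
    have e : (fun x : ℝ => 2 * (x : ℂ) * (2 * x) - 2 * (((0 : ℕ) : ℂ) + 1) * 1) =
        (((fun y : ℝ => 2 * (y : ℂ)) * fun y : ℝ => 2 * (y : ℂ)) - fun _ => 2) := by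
      ext y; simp
    rw [e]
    refine this.congr_deriv ?_
    push_cast; ring
  | more n h1 h2 =>
    rw [funext (Hc_succ (n + 1))]
    have := (((hasDerivAt_ofReal' x).const_mul 2).mul h2).sub
      (h1.const_mul (2 * (((n + 1 : ℕ) : ℂ) + 1)))
    refine this.congr_deriv ?_
    rw [Hc_succ n]
    push_cast; ring

lemma W_deriv (x : ℝ) : HasDerivAt W (-2 * x * W x) x := by
  have : HasDerivAt (fun x : ℝ => Real.exp (-x ^ 2)) (Real.exp (-x ^ 2) * (-(2 * x))) x := by
    have := ((hasDerivAt_pow 2 x).neg).exp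
    simpa using this
  refine this.ofReal_comp.congr_deriv ?_
  simp only [W]; push_cast; ring

lemma WH_deriv (n : ℕ) (x : ℝ) : HasDerivAt (fun x => W x * Hc n x) (-(W x * Hc (n + 1) x)) x := by
  rcases n with _ | n
  · refine ((W_deriv x).mul (Hc_deriv0 x)).congr_deriv ?_
    rw [Hc_zero, Hc_one]; ring
  · refine ((W_deriv x).mul (Hc_deriv n x)).congr_deriv ?_
    rw [Hc_succ]; ring

lemma ibp (n : ℕ) {F F' : ℝ → ℂ} (hd : ∀ x, HasDerivAt F (F' x) x) (hF : EB F) (hF' : EB F') :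
    ∫ x, W x * (Hc (n + 1) x * F x) = ∫ x, W x * (Hc n x * F' x) := by
  have h := integral_mul_deriv_eq_deriv_mul_of_integrable (u := F) (u' := F')
    (v := fun x => W x * Hc n x) (v' := fun x => -(W x * Hc (n + 1) x))
    (fun x _ => hd x) (fun x _ => WH_deriv n x)
    (by
      have := (((Hc_EB (n+1)).mul hF).integrable).neg
      refine this.congr (ae_of_all _ fun x => ?_)
      simp; ring)
    (by
      refine (((Hc_EB n).mul hF').integrable).congr (ae_of_all _ fun x => ?_)
      simp; ring)
    (by
      refine (((Hc_EB n).mul hF).integrable).congr (ae_of_all _ fun x => ?_)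
      simp; ring)
  have e1 : ∀ x, F x * -(W x * Hc (n + 1) x) = -(W x * (Hc (n + 1) x * F x)) := fun x => by ring
  have e2 : ∀ x, F' x * (W x * Hc n x) = (W x * (Hc n x * F' x)) := fun x => by ring
  simp only [e1, e2, integral_neg] at h
  exact neg_injective h

lemma int_W : ∫ x, W x = (√π : ℝ) := by
  unfold W
  rw [integral_complex_ofReal]
  simpa using integral_gaussian 1

lemma int_W_exp (z : ℂ) : ∫ x : ℝ, W x * Complex.exp (z * x) = (√π : ℝ) * Complex.exp (z ^ 2 / 4) := by
  have h := integral_cexp_quadratic (b := -1) (by simp) z 0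
  convert h using 2
  · ext x; rw [W, Complex.ofReal_exp, ← Complex.exp_add]; push_cast; ring_nf
  · rw [Real.sqrt_eq_rpow, Complex.ofReal_cpow pi_pos.le]; simp
  · ring_nf

lemma int_H_exp (z : ℂ) (n : ℕ) :
    ∫ x : ℝ, W x * (Hc n x * Complex.exp (z * x)) = z ^ n * ((√π : ℝ) * Complex.exp (z ^ 2 / 4)) := by
  induction n with
  | zero => simpa [Hc_zero] using int_W_exp z
  | succ n ih =>
    rw [ibp n (F' := fun x => z * Complex.exp (z * x)) ?_ (EB.cexp z) ((EB.const z).mul (EB.cexp z))]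
    · rw [pow_succ', mul_assoc, ← ih, ← integral_const_mul]
      congr 1; ext x; ring
    · intro x
      have := ((hasDerivAt_ofReal' x).const_mul z).cexp
      convert this using 1
      ring

lemma int_HH_lt (n m : ℕ) (h : m < n) : ∫ x : ℝ, W x * (Hc n x * Hc m x) = 0 := by
  induction m generalizing n with
  | zero =>
    obtain ⟨n, rfl⟩ := Nat.exists_eq_succ_of_ne_zero h.ne'
    rw [Nat.succ_eq_add_one, ibp n (F' := fun _ => 0) Hc_deriv0 (Hc_EB 0) (EB.const 0)]
    simp
  | succ m ih =>
    obtain ⟨n, rfl⟩ := Nat.exists_eq_succ_of_ne_zero (by omega : n ≠ 0)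
    rw [Nat.succ_eq_add_one, ibp n (Hc_deriv m) (Hc_EB _) ((EB.const _).mul (Hc_EB m))]
    have e : ∀ x, W x * (Hc n x * (2 * (m + 1) * Hc m x))
      = (2 * (m + 1)) * (W x * (Hc n x * Hc m x)) := fun x => by ring
    simp only [e, integral_const_mul]
    rw [ih n (by omega), mul_zero]

lemma int_HH_eq (n : ℕ) : ∫ x : ℝ, W x * (Hc n x * Hc n x) = (√π : ℝ) * (2 ^ n * n.factorial) := by
  induction n with
  | zero => simpa [Hc_zero] using int_W
  | succ n ih =>
    rw [ibp n (Hc_deriv n) (Hc_EB _) ((EB.const _).mul (Hc_EB n))]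
    have e : ∀ x, W x * (Hc n x * (2 * (n + 1) * Hc n x))
      = (2 * (n + 1)) * (W x * (Hc n x * Hc n x)) := fun x => by ring
    simp only [e, integral_const_mul]
    rw [ih, Nat.factorial_succ]; push_cast; ring

def Kn (n : ℕ) : ℝ := (Real.sqrt (Real.sqrt Real.pi))⁻¹ * (Real.sqrt (2 ^ n * Nat.factorial n))⁻¹

lemma Kn_sq (n : ℕ) : Kn n ^ 2 * (√π * (2 ^ n * n.factorial)) = 1 := by
  have : 0 < √π := Real.sqrt_pos.2 pi_pos
  rw [Kn, mul_pow, inv_pow, inv_pow, Real.sq_sqrt this.le, Real.sq_sqrt (by positivity)]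
  field_simp

def pn (n : ℕ) (x : ℝ) : ℂ := Kn n * Hc n x

lemma pn_EB (n : ℕ) : EB (pn n) := (EB.const _).mul (Hc_EB n)

lemma pn_conj (n : ℕ) (x : ℝ) : (starRingEnd ℂ) (pn n x) = pn n x := by
  simp [pn, Hc]

lemma pn_orth (n m : ℕ) : ∫ x : ℝ, W x * (pn n x * pn m x) = if n = m then 1 else 0 := by
  have e : ∀ x, W x * (pn n x * pn m x) = (Kn n * Kn m) * (W x * (Hc n x * Hc m x)) :=
    fun x => by simp only [pn]; ring
  simp only [e, integral_const_mul]
  rcases lt_trichotomy n m with h | h | h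
  · have e : ∀ x, W x * (Hc n x * Hc m x) = W x * (Hc m x * Hc n x) := fun x => by ring
    simp only [e]
    rw [int_HH_lt m n h, if_neg h.ne, mul_zero]
  · subst h
    rw [int_HH_eq, if_pos rfl]
    have := Kn_sq n
    rw [sq] at this
    exact_mod_cast this
  · rw [int_HH_lt n m h, if_neg h.ne', mul_zero]

def cf (G : ℝ → ℂ) (n : ℕ) : ℂ := ∫ x, W x * (G x * pn n x)

def Q (G : ℝ → ℂ) (N : ℕ) (x : ℝ) : ℂ := G x - ∑ n ∈ Finset.range N, cf G n * pn n x

lemma Q_succ (G : ℝ → ℂ) (N : ℕ) (x : ℝ) : Q G (N + 1) x = Q G N x - cf G N * pn N x := by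
  simp only [Q, Finset.sum_range_succ]; ring

lemma Q_EB {G : ℝ → ℂ} (hG : EB G) (N : ℕ) : EB (Q G N) :=
  hG.sub (EB.sum (fun n => (EB.const _).mul (pn_EB n)) N)

lemma int_Q_p {G : ℝ → ℂ} (hG : EB G) (N m : ℕ) (h : N ≤ m) :
    ∫ x, W x * (Q G N x * pn m x) = cf G m := by
  induction N with
  | zero => simp [Q, cf]
  | succ N ih =>
    have e : ∀ x, W x * (Q G (N + 1) x * pn m x)
      = W x * (Q G N x * pn m x) - cf G N * (W x * (pn N x * pn m x)) := fun x => by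
      rw [Q_succ]; ring
    simp only [e]
    rw [integral_sub ((Q_EB hG N).mul (pn_EB m)).integrable
      (((pn_EB N).mul (pn_EB m)).integrable.const_mul _), ih (by omega), integral_const_mul,
      pn_orth, if_neg (by omega)]
    simp

lemma int_conj (f : ℝ → ℂ) : ∫ x, W x * (starRingEnd ℂ) (f x) = (starRingEnd ℂ) (∫ x, W x * f x) := by
  rw [← integral_conj]
  congr 1; ext x; simp [W, -Complex.ofReal_exp]

lemma int_QQ {G : ℝ → ℂ} (hG : EB G) (N : ℕ) :
    ∫ x, W x * (Q G N x * (starRingEnd ℂ) (Q G N x)) =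
    (∫ x, W x * (G x * (starRingEnd ℂ) (G x))) -
      ∑ n ∈ Finset.range N, cf G n * (starRingEnd ℂ) (cf G n) := by
  induction N with
  | zero => simp [Q]
  | succ N ih =>
    have e : ∀ x, W x * (Q G (N + 1) x * (starRingEnd ℂ) (Q G (N + 1) x))
      = (W x * (Q G N x * (starRingEnd ℂ) (Q G N x))
        - (starRingEnd ℂ) (cf G N) * (W x * (Q G N x * pn N x)))
        - (cf G N * (W x * (starRingEnd ℂ) (Q G N x * pn N x))
        - (cf G N * (starRingEnd ℂ) (cf G N)) * (W x * (pn N x * pn N x))) := fun x => by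
      rw [Q_succ]; simp only [map_sub, map_mul, pn_conj]; ring
    simp only [e]
    have i1 := ((Q_EB hG N).mul (Q_EB hG N).conj).integrable
    have i2 := (((Q_EB hG N).mul (pn_EB N)).integrable).const_mul ((starRingEnd ℂ) (cf G N))
    have i3 := (((Q_EB hG N).mul (pn_EB N)).conj.integrable).const_mul (cf G N)
    have i4 := (((pn_EB N).mul (pn_EB N)).integrable).const_mul (cf G N * (starRingEnd ℂ) (cf G N))
    erw [integral_sub (i1.sub i2) (i3.sub i4)]
    rw [integral_sub' i1 i2, integral_sub' i3 i4,
      integral_const_mul, integral_const_mul, integral_const_mul, int_conj,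
      int_Q_p hG N N le_rfl, pn_orth, ih, Finset.sum_range_succ]
    simp only [if_true]
    ring

lemma tail (r : ℝ) (hr : 0 ≤ r) (N : ℕ) :
    1 - ∑ n ∈ Finset.range N, Real.exp (-r) * (r ^ n / n.factorial) ≤ r ^ N / N.factorial := by
  have hs : HasSum (fun n : ℕ => r ^ n / n.factorial) (Real.exp r) := by
    rw [Real.exp_eq_exp_ℝ]; exact NormedSpace.expSeries_div_hasSum_exp r
  have h1 := (hasSum_nat_add_iff' N).2 hs
  have h2 := hs.mul_left (r ^ N / N.factorial)
  have h3 := hasSum_le (fun n => ?_) h1 h2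
  · rw [← Finset.mul_sum]
    have : 1 = Real.exp (-r) * Real.exp r := by rw [← Real.exp_add]; simp
    calc _ = Real.exp (-r) * (Real.exp r - ∑ n ∈ Finset.range N, r ^ n / n.factorial) := by
          rw [mul_sub, ← this]
      _ ≤ Real.exp (-r) * (r ^ N / N.factorial * Real.exp r) := by gcongr
      _ = r ^ N / N.factorial * (Real.exp (-r) * Real.exp r) := by ring
      _ = _ := by rw [← this, mul_one]
  · rw [div_mul_div_comm, ← pow_add, add_comm N n]
    gcongr
    have := Nat.le_of_dvd (Nat.factorial_pos _) (Nat.factorial_mul_factorial_dvd_factorial_add N n)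
    rw [add_comm N n] at this
    exact_mod_cast this

def Gf (k s : ℝ) (x : ℝ) : ℂ := (Real.exp (-s ^ 2 / 2) : ℂ) * Complex.exp (((s : ℂ) + k * Complex.I) * x)

lemma Gf_EB (k s : ℝ) : EB (Gf k s) := (EB.const _).mul (EB.cexp _)

def w (x : ℝ) : ℂ := (Real.exp (-x ^ 2 / 2) : ℂ)

lemma w_mul (x : ℝ) : w x * w x = W x := by
  rw [w, W, ← Complex.ofReal_mul, ← Real.exp_add]; ring_nf

lemma gks_eq (k s x : ℝ) : gks k s x = w x * Gf k s x := by
  rw [gks, w, Gf, Complex.ofReal_exp, Complex.ofReal_exp, ← Complex.exp_add, ← Complex.exp_add]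
  congr 1; push_cast; ring

lemma sh_eq (n : ℕ) (x : ℝ) : (scaledHermite 1 n x : ℂ) = w x * pn n x := by
  simp only [scaledHermite, hermiteFun, w, pn, Hc, Kn, Real.sqrt_one, one_mul]
  push_cast; ring

lemma diff_eq (k s : ℝ) (N : ℕ) (x : ℝ) :
    gks k s x - hermiteProj 1 N (gks k s) x = w x * Q (Gf k s) (N + 1) x := by
  have : ∀ n, (∫ y : ℝ, gks k s y * (scaledHermite 1 n y : ℂ)) = cf (Gf k s) n := fun n => by
    rw [cf]; congr 1; ext y; rw [gks_eq, sh_eq, ← w_mul]; ring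
  simp only [hermiteProj, this]
  simp only [Q, gks_eq, sh_eq, mul_sub, Finset.mul_sum]
  congr 1
  apply Finset.sum_congr rfl; intros; ring

lemma cf_eq (k s : ℝ) (n : ℕ) : cf (Gf k s) n * (starRingEnd ℂ) (cf (Gf k s) n) =
    ((√π * (Real.exp (-((k ^ 2 + s ^ 2) / 2)) * (((k ^ 2 + s ^ 2) / 2) ^ n / n.factorial)) : ℝ) : ℂ) := by
  have h : cf (Gf k s) n = (Kn n * Real.exp (-s ^ 2 / 2) * √π : ℝ) *
      (((s : ℂ) + k * Complex.I) ^ n * Complex.exp (((s : ℂ) + k * Complex.I) ^ 2 / 4)) := by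
    have e : ∀ x, W x * (Gf k s x * pn n x) = (Kn n * Real.exp (-s ^ 2 / 2)) *
      (W x * (Hc n x * Complex.exp (((s : ℂ) + k * Complex.I) * x))) := fun x => by
      simp only [Gf, pn]; ring
    simp only [cf, e, integral_const_mul, int_H_exp]
    push_cast; ring
  rw [Complex.mul_conj]
  congr 1
  rw [h, map_mul, map_mul, map_pow, Complex.normSq_ofReal, Complex.normSq_eq_norm_sq (Complex.exp _),
    Complex.norm_exp, Complex.normSq_add_mul_I]
  have hre : ((((s : ℂ) + k * Complex.I) ^ 2) / 4).re = (s ^ 2 - k ^ 2) / 4 := by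
    rw [show (((s : ℂ) + k * Complex.I) ^ 2) / 4 = (((s ^ 2 - k ^ 2) / 4 : ℝ) : ℂ)
      + ((s * k / 2 : ℝ) : ℂ) * Complex.I by
        push_cast; linear_combination ((k : ℂ) ^ 2 / 4) * Complex.I_sq]
    simp [-Complex.ofReal_div]
  rw [hre]
  have hE : Real.exp (-((k ^ 2 + s ^ 2) / 2)) =
      Real.exp (-s ^ 2 / 2) * Real.exp (-s ^ 2 / 2) * Real.exp ((s ^ 2 - k ^ 2) / 4) ^ 2 := by
    rw [sq (Real.exp _), ← Real.exp_add, ← Real.exp_add, ← Real.exp_add]; ring_nf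
  rw [hE]
  have hK := Kn_sq n
  have hK' : Kn n ^ 2 * √π * 2 ^ n = 1 / n.factorial := by
    have : (n.factorial : ℝ) ≠ 0 := by positivity
    field_simp; linarith
  rw [div_pow, show s ^ 2 + k ^ 2 = k ^ 2 + s ^ 2 by ring]
  have h2 : (2 : ℝ) ^ n ≠ 0 := by positivity
  rw [show (k ^ 2 + s ^ 2) ^ n / 2 ^ n / (n.factorial : ℝ) =
    (k ^ 2 + s ^ 2) ^ n / 2 ^ n * (1 / n.factorial) by ring, ← hK']
  field_simp

lemma int_GG (k s : ℝ) : ∫ x, W x * (Gf k s x * (starRingEnd ℂ) (Gf k s x)) = ((√π : ℝ) : ℂ) := by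
  have e : ∀ x, W x * (Gf k s x * (starRingEnd ℂ) (Gf k s x)) =
      ((Real.exp (-1 * (x - s) ^ 2) : ℝ) : ℂ) := fun x => by
    rw [Complex.mul_conj, W, ← Complex.ofReal_mul]
    congr 1
    rw [Complex.normSq_eq_norm_sq, Gf, norm_mul, Complex.norm_exp, Complex.norm_real,
      Real.norm_eq_abs, abs_of_pos (Real.exp_pos _)]
    have : (((s : ℂ) + k * Complex.I) * x).re = s * x := by simp
    rw [this, sq (_ * _), ← Real.exp_add, ← Real.exp_add, ← Real.exp_add]
    ring_nf
  simp only [e]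
  rw [integral_complex_ofReal, integral_sub_right_eq_self (fun x => Real.exp (-1 * x ^ 2)) s,
    integral_gaussian]
  simp

lemma int_main (k s : ℝ) (N : ℕ) :
    ∫ x : ℝ, ‖gks k s x - hermiteProj 1 N (gks k s) x‖ ^ 2 =
      √π * (1 - ∑ n ∈ Finset.range (N + 1),
        Real.exp (-((k ^ 2 + s ^ 2) / 2)) * (((k ^ 2 + s ^ 2) / 2) ^ n / n.factorial)) := by
  have h := int_QQ (Gf_EB k s) (N + 1)
  have e : ∀ x, W x * (Q (Gf k s) (N + 1) x * (starRingEnd ℂ) (Q (Gf k s) (N + 1) x)) =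
      ((‖gks k s x - hermiteProj 1 N (gks k s) x‖ ^ 2 : ℝ) : ℂ) := fun x => by
    rw [diff_eq, ← Complex.normSq_eq_norm_sq, Complex.normSq_mul, Complex.mul_conj,
      ← w_mul, w, Complex.normSq_ofReal]
    push_cast; ring
  simp only [e, cf_eq, int_GG] at h
  rw [integral_complex_ofReal] at h
  rw [mul_sub, mul_one, Finset.mul_sum]
  exact_mod_cast h

/-- `‖g_{k,s} − Π̂_N g_{k,s}‖ ≤ C (N+1)!^{-1/2} ((k²+s²)/2)^{(N+1)/2}`. -/
theorem gks_proj_error :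
    ∃ C : ℝ, 0 < C ∧ ∀ k s : ℝ, ∀ N : ℕ,
      L2norm (fun x => gks k s x - hermiteProj 1 N (gks k s) x)
        ≤ C * (Real.sqrt (Nat.factorial (N + 1)))⁻¹ *
            (((k ^ 2 + s ^ 2) / 2) ^ (((N : ℝ) + 1) / 2)) := by
  have hpi : 0 < √π := Real.sqrt_pos.2 pi_pos
  refine ⟨√√π, Real.sqrt_pos.2 hpi, fun k s N => ?_⟩
  have hr : 0 ≤ (k ^ 2 + s ^ 2) / 2 := by positivity
  have ht := tail _ hr (N + 1)
  rw [L2norm, int_main]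
  calc _ ≤ √(√π * (((k ^ 2 + s ^ 2) / 2) ^ (N + 1) / (N + 1).factorial)) := by gcongr
    _ = _ := by
      rw [Real.sqrt_mul hpi.le, div_eq_mul_inv, Real.sqrt_mul (by positivity), Real.sqrt_inv,
        Real.sqrt_eq_rpow (((k ^ 2 + s ^ 2) / 2) ^ (N + 1)), ← Real.rpow_natCast,
        ← Real.rpow_mul hr]
      push_cast
      rw [show ((N : ℝ) + 1) * (1 / 2) = ((N : ℝ) + 1) / 2 by ring]
      ring
end
end

section
/- Let ∂̂_x = ∂_x + x (so ∂̂_x u (x) = u′(x) + x u(x)). There is an absolute constant C > 0 such that for every integer N ≥ 1 and every Ψ ∈ P̂_N, ‖∂̂_x Ψ‖ ≤ C √N ‖Ψ‖, where ‖·‖ is the L²(ℝ) norm. -/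
open MeasureTheory Real
noncomputable section
/-- Membership in `P̂_N = {e^{-x²/2} ψ : ψ polynomial of degree ≤ N}`. -/
def memPNR (N : ℕ) (v : ℝ → ℝ) : Prop :=
  ∃ p : Polynomial ℝ, p.degree ≤ N ∧ ∀ x : ℝ, v x = Real.exp (-x ^ 2 / 2) * p.eval x

lemma int_gauss_poly (p : Polynomial ℝ) :
    Integrable (fun x : ℝ => Real.exp (-x ^ 2) * p.eval x) := by
  induction p using Polynomial.induction_on' with
  | add p q hp hq =>
    refine (hp.add hq).congr (Filter.Eventually.of_forall fun x => ?_)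
    simp [mul_add]
  | monomial n a =>
    have h := integrable_rpow_mul_exp_neg_mul_sq (b := 1) one_pos (s := (n : ℝ))
      (by have : (0 : ℝ) ≤ n := Nat.cast_nonneg n
          linarith)
    refine (h.const_mul a).congr (Filter.Eventually.of_forall fun x => ?_)
    simp [Real.rpow_natCast]
    ring

def gaussL (p : Polynomial ℝ) : ℝ := ∫ x : ℝ, Real.exp (-x ^ 2) * p.eval x

lemma gaussL_add (p q : Polynomial ℝ) : gaussL (p + q) = gaussL p + gaussL q := by
  unfold gaussL
  rw [← integral_add (int_gauss_poly p) (int_gauss_poly q)]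
  simp [mul_add]

lemma gaussL_smul (a : ℝ) (p : Polynomial ℝ) :
    gaussL (Polynomial.C a * p) = a * gaussL p := by
  unfold gaussL
  rw [← integral_const_mul]
  congr 1
  ext x
  simp
  ring

lemma gaussL_sq (p : Polynomial ℝ) : 0 ≤ gaussL (p ^ 2) := by
  unfold gaussL
  refine integral_nonneg fun x => ?_
  simp only [Polynomial.eval_pow, Pi.zero_apply]
  positivity

open Polynomial in
lemma gaussL_parts (p : Polynomial ℝ) :
    gaussL (derivative p + C (-2) * (X * p)) = 0 := by
  unfold gaussL
  refine integral_eq_zero_of_hasDerivAt_of_integrable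
    (f := fun x : ℝ => Real.exp (-x ^ 2) * p.eval x) (fun x => ?_) (int_gauss_poly _)
    (int_gauss_poly _)
  have h1 : HasDerivAt (fun x : ℝ => -x ^ 2) (-(2 * x)) x := by
    exact (hasDerivAt_pow 2 x).fun_neg.congr_deriv (by simp)
  refine (h1.exp.fun_mul (p.hasDerivAt x)).congr_deriv ?_
  simp only [Polynomial.eval_add, Polynomial.eval_mul, Polynomial.eval_C, Polynomial.eval_X]
  ring

open Polynomial in
lemma gauss_main (N : ℕ) : ∀ p : Polynomial ℝ, p.natDegree ≤ N →
    gaussL (derivative p ^ 2) ≤ 2 * N * gaussL (p ^ 2) := by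
  induction N with
  | zero =>
    intro p hp
    have : derivative p = 0 := derivative_of_natDegree_zero (by omega)
    rw [this]
    simp [gaussL]
  | succ N ih =>
    intro p hp
    have hq : (derivative p).natDegree ≤ N :=
      (natDegree_derivative_le p).trans (by omega)
    have h1 := ih _ hq
    set q := derivative p with hqd
    set r := C 2 * (X * q) + C (-1) * derivative q with hr
    have hc2 : (C (-2) : ℝ[X]) = -2 := by rw [map_neg, map_ofNat]
    have hc2' : (C (2) : ℝ[X]) = 2 := map_ofNat C 2
    have hc1 : (C (-1) : ℝ[X]) = -1 := by rw [map_neg, map_one]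
    -- L(p r) = L(q^2)
    have e1 : gaussL (p * r) = gaussL (q ^ 2) := by
      have h := gaussL_parts (p * q)
      have e : q ^ 2 = p * r + (derivative (p * q) + C (-2) * (X * (p * q))) := by
        rw [hr, hc2, hc2', hc1, derivative_mul, ← hqd]
        ring
      rw [e, gaussL_add, h, add_zero]
    -- L(r^2) = L(q'^2) + 2 L(q^2)
    have e2 : gaussL (r ^ 2) = gaussL (derivative q ^ 2) + 2 * gaussL (q ^ 2) := by
      have h := gaussL_parts (q * r)
      have e : derivative q ^ 2 + C 2 * q ^ 2
          = r ^ 2 + (derivative (q * r) + C (-2) * (X * (q * r)))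
            + (C (1) * (derivative (q * derivative q) + C (-2) * (X * (q * derivative q)))) := by
        rw [hr, hc2, hc2', hc1]
        simp only [derivative_mul, derivative_add, derivative_X, derivative_neg, derivative_one,
          derivative_ofNat, map_one]
        ring
      have h' := gaussL_parts (q * derivative q)
      have := congrArg gaussL e
      simp only [gaussL_add, gaussL_smul] at this h h'
      linarith
    have e3 := gaussL_sq (C (2 * ((N : ℝ) + 1)) * p + C (-1) * r)
    have e4 : (C (2 * ((N : ℝ) + 1)) * p + C (-1) * r) ^ 2
        = C ((2 * ((N : ℝ) + 1)) ^ 2) * p ^ 2 + C (-2 * (2 * ((N : ℝ) + 1))) * (p * r)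
          + r ^ 2 := by
      simp only [map_mul, map_pow, map_neg, hc1, hc2']
      simp
      ring
    rw [e4, gaussL_add, gaussL_add, gaussL_smul, gaussL_smul, e1, e2] at e3
    push_cast
    have hN : (0 : ℝ) < 2 * ((N : ℝ) + 1) := by positivity
    refine le_of_mul_le_mul_left ?_ hN
    nlinarith

/-- Inverse inequality: `‖∂̂_x Ψ‖ ≤ C √N ‖Ψ‖` for all `Ψ ∈ P̂_N`, where `∂̂_x = ∂_x + x`. -/
theorem inverse_inequality_hat :
    ∃ C : ℝ, 0 < C ∧ ∀ N : ℕ, 1 ≤ N → ∀ Ψ : ℝ → ℝ, memPNR N Ψ →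
      L2norm (fun x => deriv Ψ x + x * Ψ x) ≤ C * Real.sqrt N * L2norm Ψ := by
  refine ⟨Real.sqrt 2, by positivity, ?_⟩
  rintro N - Ψ ⟨p, hp, hΨ⟩
  have hd : p.natDegree ≤ N := Polynomial.natDegree_le_of_degree_le hp
  have key := gauss_main N p hd
  have hsq : ∀ x : ℝ, Real.exp (-x ^ 2 / 2) ^ 2 = Real.exp (-x ^ 2) := fun x => by
    rw [← Real.exp_nat_mul]
    congr 1
    push_cast
    ring
  have n1 : L2norm Ψ = Real.sqrt (gaussL (p ^ 2)) := by
    unfold L2norm gaussL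
    congr 2
    ext x
    rw [hΨ, Real.norm_eq_abs, sq_abs, mul_pow, hsq, Polynomial.eval_pow]
  have n2 : L2norm (fun x => deriv Ψ x + x * Ψ x)
      = Real.sqrt (gaussL (Polynomial.derivative p ^ 2)) := by
    unfold L2norm gaussL
    congr 2
    ext x
    have h1 : HasDerivAt (fun x : ℝ => -x ^ 2 / 2) (-x) x := by
      exact ((hasDerivAt_pow 2 x).fun_neg.div_const 2).congr_deriv (by simp; ring)
    have h2 : HasDerivAt Ψ (Real.exp (-x ^ 2 / 2) * (-x) * p.eval x
        + Real.exp (-x ^ 2 / 2) * (Polynomial.derivative p).eval x) x := by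
      rw [funext hΨ]
      exact h1.exp.fun_mul (p.hasDerivAt x)
    show ‖deriv Ψ x + x * Ψ x‖ ^ 2 = _
    rw [h2.deriv, hΨ, Real.norm_eq_abs, sq_abs, Polynomial.eval_pow, ← hsq]
    ring
  rw [n1, n2, ← Real.sqrt_mul (by norm_num), ← Real.sqrt_mul (by positivity)]
  exact Real.sqrt_le_sqrt key
end
end

section
/- Let h > 1/2 and u(x) = (1 + x²)^{-h}. Then there is a constant C > 0 (depending on h) such that the Fourier transform of u satisfies |𝓕[u](k)| ≤ C (1 + |k|)^{h−1} e^{-|k|} for all k ∈ ℝ; in particular 𝓕[u] decays exponentially at infinity. -/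
open MeasureTheory Real
noncomputable section
/-- Fourier transform `𝓕[u](k) = (2π)^{-1/2} ∫ u(x) e^{-ikx} dx`. -/
def FT (u : ℝ → ℂ) (k : ℝ) : ℂ :=
  (Real.sqrt (2 * Real.pi) : ℂ)⁻¹ * ∫ x : ℝ, u x * Complex.exp (-Complex.I * (k : ℂ) * (x : ℂ))

lemma abs_log_le_aux (y : ℝ) (hy : 0 < y) : |Real.log y| ≤ |y - y⁻¹| := by
  have h1 := Real.log_le_sub_one_of_pos hy
  have h2 := Real.log_le_sub_one_of_pos (inv_pos.mpr hy)
  rw [Real.log_inv] at h2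
  rcases le_total 1 y with h | h
  · have h3 : y⁻¹ ≤ 1 := inv_le_one_of_one_le₀ h
    rw [abs_of_nonneg (Real.log_nonneg h), abs_of_nonneg (by linarith)]
    linarith
  · have h3 : 1 ≤ y⁻¹ := (one_le_inv₀ hy).mpr h
    rw [abs_of_nonpos (Real.log_nonpos hy.le h), abs_of_nonpos (by linarith)]
    linarith

lemma rpow_bound_aux (q t κ : ℝ) (ht : 0 < t) (hκ : 1 / 2 ≤ κ) :
    t ^ q ≤ κ ^ q * Real.exp (4 * |q| * |√t - κ / √t|) := by
  have hκ0 : 0 < κ := by linarith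
  have ha : 0 < √t := Real.sqrt_pos.mpr ht
  have hb : 0 < √κ := Real.sqrt_pos.mpr hκ0
  have hb2 : 1 / 2 ≤ √κ := by
    apply Real.le_sqrt_of_sq_le; linarith
  have hl := abs_log_le_aux (√t / √κ) (by positivity)
  have he : √t / √κ - (√t / √κ)⁻¹ = (√t - κ / √t) / √κ := by
    have : κ = √κ * √κ := (Real.mul_self_sqrt hκ0.le).symm
    rw [inv_div, sub_div]
    congr 1
    nth_rw 2 [this]
    field_simp
  rw [he, abs_div, abs_of_pos hb] at hl
  have hl2 : |Real.log (√t / √κ)| ≤ 2 * |√t - κ / √t| := by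
    refine hl.trans ?_
    rw [div_le_iff₀ hb]
    nlinarith [abs_nonneg (√t - κ / √t)]
  have hlog : Real.log (√t / √κ) = (Real.log t - Real.log κ) / 2 := by
    rw [Real.log_div ha.ne' hb.ne', Real.log_sqrt ht.le, Real.log_sqrt hκ0.le]; ring
  rw [Real.rpow_def_of_pos ht, Real.rpow_def_of_pos hκ0, ← Real.exp_add]
  apply Real.exp_le_exp.mpr
  have h5 : (Real.log t - Real.log κ) * q ≤ |(Real.log t - Real.log κ) * q| := le_abs_self _
  have h6 : |Real.log t - Real.log κ| = 2 * |Real.log (√t / √κ)| := by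
    rw [hlog, abs_div, abs_two]; ring
  rw [abs_mul, h6] at h5
  nlinarith [abs_nonneg q]

lemma hasDeriv_aux (κ t : ℝ) (ht : 0 < t) :
    HasDerivAt (fun t => √t - κ / √t) (1 / (2 * √t) + κ / (2 * t * √t)) t := by
  have ha : 0 < √t := Real.sqrt_pos.mpr ht
  have h1 := Real.hasDerivAt_sqrt ht.ne'
  have h2 := h1.sub ((hasDerivAt_const t κ).div h1 ha.ne')
  have e : 1 / (2 * √t) + κ / (2 * t * √t) =
      1 / (2 * √t) - (0 * √t - κ * (1 / (2 * √t))) / √t ^ 2 := by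
    have : √t ^ 2 = t := Real.sq_sqrt ht.le
    rw [this]
    field_simp
    ring
  rw [e]
  exact h2

lemma subst_aux (κ : ℝ) (hκ : 0 ≤ κ) :
    IntegrableOn (fun t => (1 / (2 * √t) + κ / (2 * t * √t)) *
      Real.exp (-(1/2) * (√t - κ / √t) ^ 2)) (Set.Ioi 0) ∧
    ∫ t in Set.Ioi 0, (1 / (2 * √t) + κ / (2 * t * √t)) *
      Real.exp (-(1/2) * (√t - κ / √t) ^ 2) ≤ ∫ w : ℝ, Real.exp (-(1/2) * w ^ 2) := by
  have hg : Integrable (fun w : ℝ => Real.exp (-(1/2) * w ^ 2)) :=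
    integrable_exp_neg_mul_sq (by norm_num)
  have hd : ∀ t ∈ Set.Ioi (0:ℝ), HasDerivWithinAt (fun t => √t - κ / √t)
      (1 / (2 * √t) + κ / (2 * t * √t)) (Set.Ioi 0) t := fun t ht =>
    (hasDeriv_aux κ t ht).hasDerivWithinAt
  have hinj : Set.InjOn (fun t => √t - κ / √t) (Set.Ioi (0:ℝ)) := by
    apply StrictMonoOn.injOn
    intro a ha b hb hab
    have ha' : 0 < √a := Real.sqrt_pos.mpr ha
    have h1 : √a < √b := Real.sqrt_lt_sqrt (le_of_lt ha) hab
    have h2 : κ / √b ≤ κ / √a := div_le_div_of_nonneg_left hκ ha' h1.le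
    show √a - κ / √a < √b - κ / √b
    linarith
  have e1 := integrableOn_image_iff_integrableOn_abs_deriv_smul measurableSet_Ioi hd hinj
    (fun w : ℝ => Real.exp (-(1/2) * w ^ 2))
  have e2 := integral_image_eq_integral_abs_deriv_smul measurableSet_Ioi hd hinj
    (fun w : ℝ => Real.exp (-(1/2) * w ^ 2))
  have hpt : Set.EqOn (fun t => |1 / (2 * √t) + κ / (2 * t * √t)| •
      Real.exp (-(1/2) * (√t - κ / √t) ^ 2)) (fun t => (1 / (2 * √t) + κ / (2 * t * √t)) *
      Real.exp (-(1/2) * (√t - κ / √t) ^ 2)) (Set.Ioi 0) := by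
    intro t ht
    have ht' : 0 < t := ht
    simp only [smul_eq_mul]
    rw [abs_of_nonneg (by positivity)]
  constructor
  · exact (e1.mp hg.integrableOn).congr_fun hpt measurableSet_Ioi
  · rw [← setIntegral_congr_fun measurableSet_Ioi hpt, ← e2]
    exact setIntegral_le_integral hg (Filter.Eventually.of_forall fun w => (Real.exp_pos _).le)

lemma integrable_u_aux (h : ℝ) (hh : 1 / 2 < h) :
    Integrable (fun x : ℝ => (1 + x ^ 2 : ℝ) ^ (-h)) := by
  have := integrable_rpow_neg_one_add_norm_sq (E := ℝ) (μ := volume) (r := 2 * h)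
    (by simp; linarith)
  convert this using 3 with x
  · simp
  · ring

lemma gamma_int_aux (h r : ℝ) (hh : 0 < h) (hr : 0 < r) :
    IntegrableOn (fun t : ℝ => t ^ (h - 1) * Real.exp (-(r * t))) (Set.Ioi 0) := by
  have := integrableOn_rpow_mul_exp_neg_mul_rpow (p := 1) (s := h - 1) (b := r)
    (by linarith) one_pos hr
  simpa using this

lemma swap_aux (h k : ℝ) (hh : 1 / 2 < h) :
    (Real.Gamma h : ℂ) * ∫ x : ℝ, (((1 + x ^ 2 : ℝ) ^ (-h) : ℝ) : ℂ) *
        Complex.exp (-Complex.I * (k : ℂ) * (x : ℂ)) =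
    ∫ t in Set.Ioi (0:ℝ), ∫ x : ℝ, ((t ^ (h - 1) * Real.exp (-((1 + x ^ 2) * t)) : ℝ) : ℂ) *
        Complex.exp (-Complex.I * (k : ℂ) * (x : ℂ)) := by
  have hG : ∀ x : ℝ, ∫ t in Set.Ioi (0:ℝ), t ^ (h - 1) * Real.exp (-((1 + x ^ 2) * t)) =
      (1 + x ^ 2) ^ (-h) * Real.Gamma h := by
    intro x
    rw [Real.integral_rpow_mul_exp_neg_mul_Ioi (by linarith) (by positivity),
      one_div, Real.inv_rpow (by positivity), Real.rpow_neg (by positivity)]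
  have hnorm : ∀ x : ℝ, ‖Complex.exp (-Complex.I * (k : ℂ) * (x : ℂ))‖ = 1 := by
    intro x
    have : -Complex.I * (k : ℂ) * (x : ℂ) = ((-(k * x) : ℝ) : ℂ) * Complex.I := by
      push_cast; ring
    rw [this, Complex.norm_exp_ofReal_mul_I]
  rw [← integral_integral_swap (f := fun (x t : ℝ) =>
    ((t ^ (h - 1) * Real.exp (-((1 + x ^ 2) * t)) : ℝ) : ℂ) *
        Complex.exp (-Complex.I * (k : ℂ) * (x : ℂ))), ← integral_const_mul]
  · congr 1
    ext x
    rw [integral_mul_const, integral_complex_ofReal, hG x]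
    push_cast; ring
  · rw [integrable_prod_iff]
    · constructor
      · refine Filter.Eventually.of_forall fun x => ?_
        have hi := gamma_int_aux h (1 + x ^ 2) (by linarith) (by positivity)
        exact (Integrable.ofReal (𝕜 := ℂ) hi).mul_const
          (Complex.exp (-Complex.I * (k : ℂ) * (x : ℂ)))
      · refine ((integrable_u_aux h hh).mul_const (Real.Gamma h)).congr ?_
        refine Filter.Eventually.of_forall fun x => ?_
        simp only [Function.uncurry]
        rw [← hG x]
        refine setIntegral_congr_fun measurableSet_Ioi fun t ht => ?_
        have ht' : 0 < t := ht
        rw [norm_mul, hnorm, mul_one, Complex.norm_real, Real.norm_of_nonneg (by positivity)]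
    · apply Measurable.aestronglyMeasurable
      unfold Function.uncurry
      fun_prop

lemma inner_aux (h k t : ℝ) (ht : 0 < t) :
    ‖∫ x : ℝ, ((t ^ (h - 1) * Real.exp (-((1 + x ^ 2) * t)) : ℝ) : ℂ) *
        Complex.exp (-Complex.I * (k : ℂ) * (x : ℂ))‖ =
      t ^ (h - 1) * Real.exp (-t) * (√π / √t * Real.exp (-k ^ 2 / (4 * t))) := by
  have hf := fourierIntegral_gaussian (b := (t : ℂ)) (by simpa using ht) (-(k : ℂ))
  have : ∀ x : ℝ, ((t ^ (h - 1) * Real.exp (-((1 + x ^ 2) * t)) : ℝ) : ℂ) *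
        Complex.exp (-Complex.I * (k : ℂ) * (x : ℂ)) =
      ((t ^ (h - 1) * Real.exp (-t) : ℝ) : ℂ) * (Complex.exp (Complex.I * (-(k : ℂ)) * x) *
        Complex.exp (-(t : ℂ) * (x : ℂ) ^ 2)) := by
    intro x
    have e : Real.exp (-((1 + x ^ 2) * t)) = Real.exp (-t) * Real.exp (-t * x ^ 2) := by
      rw [← Real.exp_add]; ring_nf
    rw [e]
    push_cast
    have e2 : Complex.I * (-(k : ℂ)) * x = -Complex.I * k * x := by ring
    rw [e2]
    ring
  simp_rw [this]
  rw [integral_const_mul, hf, norm_mul, Complex.norm_real, Real.norm_of_nonneg (by positivity)]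
  congr 1
  have e3 : ((π : ℂ) / (t : ℂ)) ^ (1 / 2 : ℂ) * Complex.exp (-(-(k : ℂ)) ^ 2 / (4 * (t : ℂ))) =
      (((π / t) ^ (1 / 2 : ℝ) * Real.exp (-k ^ 2 / (4 * t)) : ℝ) : ℂ) := by
    rw [Complex.ofReal_mul, Complex.ofReal_cpow (by positivity)]
    push_cast
    rw [neg_sq]
  rw [e3, Complex.norm_real, Real.norm_of_nonneg (by positivity), ← Real.sqrt_eq_rpow,
    Real.sqrt_div pi_pos.le]

lemma pointwise_aux (h k t : ℝ) (hk : 1 ≤ |k|) (ht : 0 < t) :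
    t ^ (h - 1) * Real.exp (-t) * (√π / √t * Real.exp (-k ^ 2 / (4 * t))) ≤
      (2 * √π * (|k| / 2) ^ (h - 1) * Real.exp (-|k|) * Real.exp (8 * (h - 1) ^ 2)) *
      ((1 / (2 * √t) + (|k| / 2) / (2 * t * √t)) *
        Real.exp (-(1/2) * (√t - (|k| / 2) / √t) ^ 2)) := by
  have ha : 0 < √t := Real.sqrt_pos.mpr ht
  have h1 := rpow_bound_aux (h - 1) t (|k| / 2) ht (by linarith)
  set w := √t - (|k| / 2) / √t with hw
  have hw2 : -t + -k ^ 2 / (4 * t) = -|k| - w ^ 2 := by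
    have e : √t ^ 2 = t := Real.sq_sqrt ht.le
    have e2 : w ^ 2 = √t ^ 2 - |k| + |k| ^ 2 / (4 * √t ^ 2) := by
      rw [hw]; field_simp; ring
    rw [e2, e, sq_abs]; ring
  have hs : 4 * |h - 1| * |w| ≤ 8 * (h - 1) ^ 2 + 1 / 2 * w ^ 2 := by
    rw [← sq_abs (h - 1), ← sq_abs w]
    nlinarith [sq_nonneg (4 * |h - 1| - |w|)]
  have hp : 0 < (|k| / 2) ^ (h - 1) := Real.rpow_pos_of_pos (by linarith) _
  have h2 : t ^ (h - 1) ≤ (|k| / 2) ^ (h - 1) * Real.exp (8 * (h - 1) ^ 2 + 1 / 2 * w ^ 2) :=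
    h1.trans (by gcongr)
  calc t ^ (h - 1) * Real.exp (-t) * (√π / √t * Real.exp (-k ^ 2 / (4 * t)))
      = t ^ (h - 1) * (√π / √t * Real.exp (-|k| - w ^ 2)) := by
        rw [← hw2, Real.exp_add]; ring
    _ ≤ ((|k| / 2) ^ (h - 1) * Real.exp (8 * (h - 1) ^ 2 + 1 / 2 * w ^ 2)) *
        (√π / √t * Real.exp (-|k| - w ^ 2)) := by gcongr
    _ = (2 * √π * (|k| / 2) ^ (h - 1) * Real.exp (-|k|) * Real.exp (8 * (h - 1) ^ 2)) *
      ((1 / (2 * √t)) * Real.exp (-(1/2) * w ^ 2)) := by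
        have : Real.exp (8 * (h - 1) ^ 2 + 1 / 2 * w ^ 2) * Real.exp (-|k| - w ^ 2) =
          Real.exp (-|k|) * Real.exp (8 * (h - 1) ^ 2) * Real.exp (-(1/2) * w ^ 2) := by
          simp only [← Real.exp_add]; ring_nf
        calc _ = (|k| / 2) ^ (h - 1) * (√π / √t) * (Real.exp (8 * (h - 1) ^ 2 + 1 / 2 * w ^ 2) *
              Real.exp (-|k| - w ^ 2)) := by ring
          _ = _ := by rw [this]; field_simp
    _ ≤ _ := by
        gcongr
        have : 0 ≤ (|k| / 2) / (2 * t * √t) := by positivity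
        linarith

lemma rpow_lower_aux (q x y c : ℝ) (hx : 0 < x) (hc : 1 ≤ c) (hxy : x ≤ c * y) (hyx : y ≤ c * x) :
    x ^ q ≤ c ^ |q| * y ^ q := by
  have hy : 0 < y := by
    by_contra hn
    nlinarith
  have hc0 : 0 < c := by linarith
  rcases le_total 0 q with h | h
  · rw [abs_of_nonneg h, ← Real.mul_rpow hc0.le hy.le]
    exact Real.rpow_le_rpow hx.le hxy h
  · rw [abs_of_nonpos h, Real.rpow_neg hc0.le, ← Real.inv_rpow hc0.le,
      ← Real.mul_rpow (by positivity) hy.le]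
    apply Real.rpow_le_rpow_of_nonpos (by positivity) _ h
    rw [inv_mul_le_iff₀ hc0]; exact hyx

/-- The Fourier transform of `(1+x²)^{-h}` decays like `(1+|k|)^{h-1} e^{-|k|}`. -/
theorem fourier_decay_of_algebraic (h : ℝ) (hh : 1 / 2 < h) :
    ∃ C : ℝ, 0 < C ∧ ∀ k : ℝ,
      ‖FT (fun x => ((((1 + x ^ 2 : ℝ)) ^ (-h) : ℝ) : ℂ)) k‖
        ≤ C * (1 + |k|) ^ (h - 1) * Real.exp (-|k|) := by
  set M : ℝ := ∫ w : ℝ, Real.exp (-(1/2) * w ^ 2) with hM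
  set I0 : ℝ := ∫ x : ℝ, (1 + x ^ 2 : ℝ) ^ (-h) with hI0
  have hM0 : 0 ≤ M := integral_nonneg fun w => (Real.exp_pos _).le
  have hI00 : 0 ≤ I0 := integral_nonneg fun x => by positivity
  have hG : 0 < Real.Gamma h := Real.Gamma_pos_of_pos (by linarith)
  set S : ℝ := (√(2 * π))⁻¹ with hS
  have hS0 : 0 < S := by positivity
  set C1 : ℝ := S * (I0 * 2 ^ |h - 1| * Real.exp 1) with hC1
  set C2 : ℝ := S * ((Real.Gamma h)⁻¹ * (2 * √π * 4 ^ |h - 1| * Real.exp (8 * (h - 1) ^ 2) * M))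
    with hC2
  have hC10 : 0 ≤ C1 := by positivity
  have hC20 : 0 ≤ C2 := by positivity
  refine ⟨C1 + C2 + 1, by positivity, fun k => ?_⟩
  have hP : 0 < (1 + |k|) ^ (h - 1) := by positivity
  have hE : 0 < Real.exp (-|k|) := Real.exp_pos _
  have hPE := mul_pos hP hE
  unfold FT
  rw [norm_mul, norm_inv, Complex.norm_real, Real.norm_of_nonneg (Real.sqrt_nonneg _), ← hS]
  rcases le_total |k| 1 with hk | hk
  · have hb : ‖∫ x : ℝ, (((1 + x ^ 2 : ℝ) ^ (-h) : ℝ) : ℂ) *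
        Complex.exp (-Complex.I * (k : ℂ) * (x : ℂ))‖ ≤ I0 := by
      apply norm_integral_le_of_norm_le (integrable_u_aux h hh)
      refine Filter.Eventually.of_forall fun x => ?_
      have : -Complex.I * (k : ℂ) * (x : ℂ) = ((-(k * x) : ℝ) : ℂ) * Complex.I := by
        push_cast; ring
      rw [norm_mul, this, Complex.norm_exp_ofReal_mul_I, mul_one, Complex.norm_real,
        Real.norm_of_nonneg (by positivity)]
    have hr := rpow_lower_aux (h - 1) 1 (1 + |k|) 2 one_pos one_le_two
      (by linarith [abs_nonneg k]) (by linarith)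
    rw [Real.one_rpow] at hr
    have he : 1 ≤ Real.exp 1 * Real.exp (-|k|) := by
      rw [← Real.exp_add]; exact Real.one_le_exp (by linarith)
    have hone : 1 ≤ (2 ^ |h - 1| * (1 + |k|) ^ (h - 1)) * (Real.exp 1 * Real.exp (-|k|)) :=
      one_le_mul_of_one_le_of_one_le hr he
    calc _ ≤ S * I0 := by gcongr
      _ = S * I0 * 1 := by ring
      _ ≤ S * I0 * ((2 ^ |h - 1| * (1 + |k|) ^ (h - 1)) * (Real.exp 1 * Real.exp (-|k|))) := by
        gcongr
      _ = C1 * ((1 + |k|) ^ (h - 1) * Real.exp (-|k|)) := by rw [hC1]; ring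
      _ ≤ _ := by
        rw [mul_assoc (C1 + C2 + 1)]
        exact mul_le_mul_of_nonneg_right (by linarith) hPE.le
  · have hsub := subst_aux (|k| / 2) (by positivity)
    have hsw := swap_aux h k hh
    have hb : Real.Gamma h * ‖∫ x : ℝ, (((1 + x ^ 2 : ℝ) ^ (-h) : ℝ) : ℂ) *
        Complex.exp (-Complex.I * (k : ℂ) * (x : ℂ))‖ ≤
        (2 * √π * (|k| / 2) ^ (h - 1) * Real.exp (-|k|) * Real.exp (8 * (h - 1) ^ 2)) * M := by
      have : Real.Gamma h = ‖(Real.Gamma h : ℂ)‖ := by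
        rw [Complex.norm_real, Real.norm_of_nonneg hG.le]
      rw [this, ← norm_mul, hsw]
      refine (norm_integral_le_of_norm_le (hsub.1.const_mul (2 * √π * (|k| / 2) ^ (h - 1) *
        Real.exp (-|k|) * Real.exp (8 * (h - 1) ^ 2))) ?_).trans ?_
      · refine (ae_restrict_iff' measurableSet_Ioi).mpr (Filter.Eventually.of_forall fun t ht => ?_)
        rw [inner_aux h k t ht]
        exact pointwise_aux h k t hk ht
      · rw [integral_const_mul]
        exact mul_le_mul_of_nonneg_left hsub.2 (by positivity)
    have hr := rpow_lower_aux (h - 1) (|k| / 2) (1 + |k|) 4 (by linarith) (by norm_num)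
      (by linarith) (by linarith)
    rw [mul_comm, ← le_div_iff₀ hG] at hb
    calc _ ≤ S * ((2 * √π * (|k| / 2) ^ (h - 1) * Real.exp (-|k|) *
          Real.exp (8 * (h - 1) ^ 2)) * M / Real.Gamma h) := by gcongr
      _ ≤ S * ((2 * √π * (4 ^ |h - 1| * (1 + |k|) ^ (h - 1)) * Real.exp (-|k|) *
          Real.exp (8 * (h - 1) ^ 2)) * M / Real.Gamma h) := by gcongr
      _ = C2 * ((1 + |k|) ^ (h - 1) * Real.exp (-|k|)) := by rw [hC2]; field_simp
      _ ≤ _ := by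
        rw [mul_assoc (C1 + C2 + 1)]
        exact mul_le_mul_of_nonneg_right (by linarith) hPE.le
end
end
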